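/- arXiv:1602.02146 — 4 statements merged into one kernel-verified Lean document; each statement's English description precedes it below -/
import Mathlib

section
/- If f, g ∈ PL(I) and x ∈ [0,1] satisfies f(x) = x and g(x) = x, then there is a neighborhood of x in [0,1] on which the commutator f g f⁻¹ g⁻¹ is the identity. -/
/-- The unit interval `[0,1]`. -/
abbrev UnitInt : Type := Set.Icc (0 : ℝ) 1

/-- `f` is an orientation-preserving piecewise linear homeomorphism of `[0,1]`:
it is strictly increasing and there is a finite partition `0 = t 0 < t 1 < ⋯ < t k = 1`
such that `f` is affine on each subinterval `[t i, t (i+1)]`. -/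
def IsPLHomeo (f : Homeomorph UnitInt UnitInt) : Prop :=
  StrictMono f ∧
    ∃ (k : ℕ) (t : Fin (k + 1) → ℝ), t 0 = 0 ∧ t (Fin.last k) = 1 ∧ StrictMono t ∧
      ∀ i : Fin k, ∃ a b : ℝ, ∀ x : UnitInt,
        (x : ℝ) ∈ Set.Icc (t i.castSucc) (t i.succ) → (f x : ℝ) = a * (x : ℝ) + b

open Filter Topology in
lemma pl_right (f : Homeomorph UnitInt UnitInt) (hf : IsPLHomeo f) (x : UnitInt) (hfx : f x = x) :
    ∃ c : ℝ, ∀ᶠ y : UnitInt in 𝓝 x, x ≤ y → (f y : ℝ) = x + c * ((y : ℝ) - x) := by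
  obtain ⟨-, k, t, h0, h1, -, ht⟩ := hf
  rcases eq_or_lt_of_le x.2.2 with hx | hx
  · refine ⟨0, Eventually.of_forall fun y hy => ?_⟩
    have : y = x := le_antisymm (by
      have := y.2.2
      have : (y : ℝ) ≤ x := by linarith
      exact this) hy
    rw [this, hfx]; simp
  · have : ∃ i : Fin k, t i.castSucc ≤ x ∧ (x : ℝ) < t i.succ := by
      by_contra! hc
      have : ∀ j, t j ≤ x := fun j => Fin.induction (motive := fun j => t j ≤ x)
        (by rw [h0]; exact x.2.1) (fun i hi => hc i hi) j
      have := this (Fin.last k)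
      linarith
    obtain ⟨i, hi1, hi2⟩ := this
    obtain ⟨a, b, hab⟩ := ht i
    refine ⟨a, ?_⟩
    have hxx := hab x ⟨hi1, hi2.le⟩
    rw [hfx] at hxx
    have hev : ∀ᶠ y : UnitInt in 𝓝 x, (y : ℝ) < t i.succ :=
      continuous_subtype_val.continuousAt.eventually_lt continuousAt_const hi2
    filter_upwards [hev] with y hy hxy
    have hxy' : (x : ℝ) ≤ y := hxy
    rw [hab y ⟨hi1.trans hxy', hy.le⟩]
    linarith

open Filter Topology in
lemma pl_left (f : Homeomorph UnitInt UnitInt) (hf : IsPLHomeo f) (x : UnitInt) (hfx : f x = x) :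
    ∃ c : ℝ, ∀ᶠ y : UnitInt in 𝓝 x, y ≤ x → (f y : ℝ) = x + c * ((y : ℝ) - x) := by
  obtain ⟨-, k, t, h0, h1, -, ht⟩ := hf
  rcases eq_or_lt_of_le x.2.1 with hx | hx
  · refine ⟨0, Eventually.of_forall fun y hy => ?_⟩
    have : y = x := le_antisymm hy (by
      have := y.2.1
      have : (x : ℝ) ≤ y := by linarith
      exact this)
    rw [this, hfx]; simp
  · have : ∃ i : Fin k, t i.castSucc < x ∧ (x : ℝ) ≤ t i.succ := by
      by_contra! hc
      have : ∀ j, t j < x := fun j => Fin.induction (motive := fun j => t j < x)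
        (by rw [h0]; exact hx) (fun i hi => hc i hi) j
      have := this (Fin.last k)
      have := x.2.2
      linarith
    obtain ⟨i, hi1, hi2⟩ := this
    obtain ⟨a, b, hab⟩ := ht i
    refine ⟨a, ?_⟩
    have hxx := hab x ⟨hi1.le, hi2⟩
    rw [hfx] at hxx
    have hev : ∀ᶠ y : UnitInt in 𝓝 x, t i.castSucc < (y : ℝ) :=
      continuousAt_const.eventually_lt continuous_subtype_val.continuousAt hi1
    filter_upwards [hev] with y hy hxy
    have hxy' : (y : ℝ) ≤ x := hxy
    rw [hab y ⟨hy.le, hxy'.trans hi2⟩]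
    linarith

/-- If `f, g ∈ PL(I)` both fix a point `x ∈ [0,1]`, then the commutator `f g f⁻¹ g⁻¹` is
the identity on a neighborhood of `x` in `[0,1]`. -/
theorem plI_commutator_eventually_id_of_fixed
    (f g : Homeomorph UnitInt UnitInt) (hf : IsPLHomeo f) (hg : IsPLHomeo g)
    (x : UnitInt) (hfx : f x = x) (hgx : g x = x) :
    ∃ V ∈ nhds x, ∀ z ∈ V, f (g (f.symm (g.symm z))) = z := by
  obtain ⟨a, ha⟩ := pl_right f hf x hfx
  obtain ⟨b, hb⟩ := pl_left f hf x hfx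
  obtain ⟨c, hc⟩ := pl_right g hg x hgx
  obtain ⟨d, hd⟩ := pl_left g hg x hgx
  have tf : Filter.Tendsto f (nhds x) (nhds x) := by
    have := f.continuous.tendsto x
    rwa [hfx] at this
  have tg : Filter.Tendsto g (nhds x) (nhds x) := by
    have := g.continuous.tendsto x
    rwa [hgx] at this
  have key : ∀ᶠ y in nhds x, f (g y) = g (f y) := by
    filter_upwards [ha, hb, hc, hd, tg.eventually ha, tg.eventually hb, tf.eventually hc,
      tf.eventually hd] with y h1 h2 h3 h4 h5 h6 h7 h8
    apply Subtype.ext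
    rcases le_total x y with h | h
    · have e1 : x ≤ g y := by
        have := hg.1.monotone h
        rwa [hgx] at this
      have e2 : x ≤ f y := by
        have := hf.1.monotone h
        rwa [hfx] at this
      rw [h5 e1, h7 e2, h1 h, h3 h]; ring
    · have e1 : g y ≤ x := by
        have := hg.1.monotone h
        rwa [hgx] at this
      have e2 : f y ≤ x := by
        have := hf.1.monotone h
        rwa [hfx] at this
      rw [h6 e1, h8 e2, h2 h, h4 h]; ring
  have ts : Filter.Tendsto (fun z => f.symm (g.symm z)) (nhds x) (nhds x) := by
    have h := (f.symm.continuous.comp g.symm.continuous).tendsto x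
    have e : (f.symm ∘ g.symm) x = x := by
      have e1 : g.symm x = x := by rw [Homeomorph.symm_apply_eq, hgx]
      have e2 : f.symm x = x := by rw [Homeomorph.symm_apply_eq, hfx]
      simp [e1, e2]
    rw [e] at h
    exact h
  refine ⟨_, ts.eventually key, fun z hz => ?_⟩
  have hz' : f (g (f.symm (g.symm z))) = g (f (f.symm (g.symm z))) := hz
  rw [hz']; simp
end

section
/- Let A be a topological manifold (in particular a regular Hausdorff space), let B be a topological space, and let f be a homeomorphism of A × B. Then f({a} × B) = {a} × B holds for every a ∈ A if and only if f(cl(U × B)) ⊆ cl(U × B) holds for every open set U ⊆ A, where cl denotes closure in A × B. -/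
/-- Let `A` be a topological manifold, `B` a topological space, and `f` a homeomorphism of
`A × B`.  Then `f({a} × B) = {a} × B` for every `a ∈ A` if and only if
`f(cl(U × B)) ⊆ cl(U × B)` for every open `U ⊆ A`. -/
theorem fiber_preserving_iff_closure_invariant
    {n : ℕ} {A B : Type*} [TopologicalSpace A] [TopologicalSpace B]
    [T2Space A] [ChartedSpace (EuclideanSpace ℝ (Fin n)) A]
    (f : Homeomorph (A × B) (A × B)) :
    (∀ a : A, ⇑f '' ({a} ×ˢ (Set.univ : Set B)) = {a} ×ˢ (Set.univ : Set B)) ↔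
      ∀ U : Set A, IsOpen U →
        ⇑f '' closure (U ×ˢ (Set.univ : Set B)) ⊆ closure (U ×ˢ (Set.univ : Set B)) := by
  constructor
  · intro h U _
    have h1 : ∀ p : A × B, (f p).1 = p.1 := by
      intro p
      have : f p ∈ ({p.1} : Set A) ×ˢ (Set.univ : Set B) := by
        rw [← h p.1]
        exact ⟨p, by simp, rfl⟩
      simpa using this
    rw [closure_prod_eq, closure_univ]
    rintro _ ⟨p, hp, rfl⟩
    refine ⟨?_, Set.mem_univ _⟩
    rw [h1]
    exact hp.1
  · intro h
    have h1 : ∀ p : A × B, (f p).1 = p.1 := by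
      intro p
      by_contra hne
      obtain ⟨V, U, hV, hU, hpV, hpU, hd⟩ := t2_separation hne
      have h2 := h U hU ⟨p, subset_closure ⟨hpU, Set.mem_univ _⟩, rfl⟩
      rw [closure_prod_eq] at h2
      exact Set.disjoint_left.1 (hd.closure_right hV) hpV h2.1
    intro a
    ext q
    constructor
    · rintro ⟨p, hp, rfl⟩
      refine ⟨?_, Set.mem_univ _⟩
      rw [h1]
      exact hp.1
    · intro hq
      refine ⟨f.symm q, ⟨?_, Set.mem_univ _⟩, f.apply_symm_apply q⟩
      rw [← h1, f.apply_symm_apply]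
      exact hq.1
end

section
/- For every n ≥ 1, every nonempty open set U ⊆ [0,1]ⁿ, and every point y = (x, t) ∈ U with vertical coordinate t ∈ (0,1), the set {f(y) : f ∈ PL(Iⁿ, F) and f(z) = z for all z ∉ U} is uncountable. -/
/-- The unit cube `[0,1]ⁿ`. -/
abbrev Cube (n : ℕ) : Type := Set.Icc (0 : Fin n → ℝ) 1

/-- `f` is an orientation-preserving piecewise linear homeomorphism of the cube `[0,1]ⁿ`:
there is a finite family of `n`-dimensional affine simplices (convex hulls of `n + 1`
affinely independent points) with pairwise disjoint interiors whose union is `[0,1]ⁿ`,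
such that on each simplex `f` agrees with an affine map of `ℝⁿ` whose linear part has
positive determinant. -/
def IsPLCubeHomeo {n : ℕ} (f : Homeomorph (Cube n) (Cube n)) : Prop :=
  ∃ (k : ℕ) (p : Fin k → Fin (n + 1) → Fin n → ℝ)
    (A : Fin k → ((Fin n → ℝ) →ᵃ[ℝ] (Fin n → ℝ))),
      (∀ i, AffineIndependent ℝ (p i)) ∧
      (∀ i j, i ≠ j →
        interior (convexHull ℝ (Set.range (p i))) ∩
          interior (convexHull ℝ (Set.range (p j))) = ∅) ∧
      (⋃ i, convexHull ℝ (Set.range (p i))) = Set.Icc (0 : Fin n → ℝ) 1 ∧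
      (∀ i, 0 < LinearMap.det (A i).linear) ∧
      (∀ i, ∀ x : Cube n, (x : Fin n → ℝ) ∈ convexHull ℝ (Set.range (p i)) →
        (f x : Fin n → ℝ) = A i (x : Fin n → ℝ))

/-- Identifying `[0,1]ⁿ = [0,1]ⁿ⁻¹ × [0,1]`, the vertical line over the point whose first
`n - 1` coordinates are those of `c`: all points of the cube agreeing with `c` in every
coordinate except the last one. -/
def VertLine {n : ℕ} (c : Fin n → ℝ) : Set (Cube n) :=
  {z | ∀ i : Fin n, (i : ℕ) + 1 < n → (z : Fin n → ℝ) i = c i}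

namespace PLV

/-- hull of a tuple of points -/
abbrev hull {n : ℕ} (q : Fin (n+1) → Fin n → ℝ) : Set (Fin n → ℝ) := convexHull ℝ (Set.range q)

/-- dissection of a set into simplices satisfying `Q` -/
def Dis {n : ℕ} (S : Set (Fin n → ℝ)) (Q : (Fin (n+1) → Fin n → ℝ) → Prop) : Prop :=
  ∃ T : Set (Fin (n+1) → Fin n → ℝ), T.Finite ∧ (∀ q ∈ T, AffineIndependent ℝ q ∧ Q q) ∧
    (∀ q ∈ T, ∀ r ∈ T, q ≠ r → interior (hull q) ∩ interior (hull r) = ∅) ∧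
    (⋃ q ∈ T, hull q) = S

theorem Dis.single {n : ℕ} {q : Fin (n+1) → Fin n → ℝ} (hq : AffineIndependent ℝ q)
    {Q : (Fin (n+1) → Fin n → ℝ) → Prop} (h : Q q) : Dis (hull q) Q :=
  ⟨{q}, Set.finite_singleton q, by simpa using ⟨hq, h⟩, by
    intro a ha b hb hab
    exact absurd (ha.trans hb.symm) hab, by simp⟩

theorem Dis.bind {n : ℕ} {S : Set (Fin n → ℝ)} {P Q : (Fin (n+1) → Fin n → ℝ) → Prop}
    (h : Dis S P) (h2 : ∀ q, AffineIndependent ℝ q → P q → hull q ⊆ S → Dis (hull q) Q) :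
    Dis S Q := by
  obtain ⟨T, hT, hP, hd, hu⟩ := h
  have hsub : ∀ q ∈ T, hull q ⊆ S := fun q hq => hu ▸ Set.subset_biUnion_of_mem (u := hull) hq
  have h3 : ∀ q : T, Dis (hull q.1) Q := fun q =>
    h2 q.1 (hP _ q.2).1 (hP _ q.2).2 (hsub _ q.2)
  choose R hR hRQ hRd hRu using h3
  have : Finite T := hT
  refine ⟨⋃ q, R q, Set.finite_iUnion hR, ?_, ?_, ?_⟩
  · intro q hq
    obtain ⟨a, ha⟩ := Set.mem_iUnion.1 hq
    exact hRQ a q ha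
  · intro q hq r hr hqr
    obtain ⟨a, ha⟩ := Set.mem_iUnion.1 hq
    obtain ⟨b, hb⟩ := Set.mem_iUnion.1 hr
    by_cases hab : a = b
    · subst hab
      exact hRd a q ha r hb hqr
    · have h1 : hull q ⊆ hull a.1 := (hRu a) ▸ Set.subset_biUnion_of_mem (u := hull) ha
      have h2 : hull r ⊆ hull b.1 := (hRu b) ▸ Set.subset_biUnion_of_mem (u := hull) hb
      have := hd a a.2 b b.2 (fun h => hab (Subtype.ext h))
      exact Set.eq_empty_of_subset_empty
        (this ▸ Set.inter_subset_inter (interior_mono h1) (interior_mono h2))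
  · rw [← hu]
    ext x
    simp only [Set.mem_iUnion]
    constructor
    · rintro ⟨q, ⟨a, ha⟩, hx⟩
      refine ⟨a.1, a.2, ?_⟩
      rw [← hRu a]
      exact Set.mem_biUnion ha hx
    · rintro ⟨a, ha, hx⟩
      rw [← hRu ⟨a, ha⟩] at hx
      simp only [Set.mem_iUnion] at hx
      obtain ⟨q, hq, hx⟩ := hx
      exact ⟨q, ⟨⟨a, ha⟩, hq⟩, hx⟩

/-- one-sidedness -/
def OneSided {n : ℕ} (l : (Fin n → ℝ) →ᵃ[ℝ] ℝ) (S : Set (Fin n → ℝ)) : Prop :=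
  (∀ x ∈ S, 0 ≤ l x) ∨ (∀ x ∈ S, l x ≤ 0)

theorem OneSided.mono {n : ℕ} {l : (Fin n → ℝ) →ᵃ[ℝ] ℝ} {S S' : Set (Fin n → ℝ)}
    (h : OneSided l S) (hs : S' ⊆ S) : OneSided l S' :=
  h.imp (fun h x hx => h x (hs hx)) (fun h x hx => h x (hs hx))

theorem hull_nonneg {n : ℕ} (l : (Fin n → ℝ) →ᵃ[ℝ] ℝ) (q : Fin (n+1) → Fin n → ℝ)
    (h : ∀ k, 0 ≤ l (q k)) : ∀ x ∈ hull q, 0 ≤ l x := by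
  have : hull q ⊆ l ⁻¹' (Set.Ici 0) := by
    refine convexHull_min ?_ ((convex_Ici (0:ℝ)).affine_preimage l)
    rintro _ ⟨k, rfl⟩
    exact h k
  exact this

theorem hull_nonpos {n : ℕ} (l : (Fin n → ℝ) →ᵃ[ℝ] ℝ) (q : Fin (n+1) → Fin n → ℝ)
    (h : ∀ k, l (q k) ≤ 0) : ∀ x ∈ hull q, l x ≤ 0 := by
  have : hull q ⊆ l ⁻¹' (Set.Iic 0) := by
    refine convexHull_min ?_ ((convex_Iic (0:ℝ)).affine_preimage l)
    rintro _ ⟨k, rfl⟩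
    exact h k
  exact this

theorem span_top {n : ℕ} {q : Fin (n+1) → Fin n → ℝ} (hq : AffineIndependent ℝ q) :
    affineSpan ℝ (Set.range q) = ⊤ := by
  rw [hq.affineSpan_eq_top_iff_card_eq_finrank_add_one]
  simp

theorem interior_ne {n : ℕ} {q : Fin (n+1) → Fin n → ℝ} (hq : AffineIndependent ℝ q) :
    (interior (hull q)).Nonempty :=
  interior_convexHull_nonempty_iff_affineSpan_eq_top.2 (span_top hq)

theorem sum_update {n : ℕ} (q : Fin (n+1) → Fin n → ℝ) (i : Fin (n+1)) (m : Fin n → ℝ)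
    (w : Fin (n+1) → ℝ) :
    ∑ k, w k • Function.update q i m k = ∑ k, w k • q k + w i • (m - q i) := by
  have : ∀ k, w k • Function.update q i m k = w k • q k + if k = i then w i • (m - q i) else 0 := by
    intro k
    by_cases h : k = i
    · subst h; simp [smul_sub]
    · simp [h]
  simp [this, Finset.sum_add_distrib]

theorem sum_pert {n : ℕ} (q : Fin (n+1) → Fin n → ℝ) (i j : Fin (n+1)) (c : ℝ)
    (w : Fin (n+1) → ℝ) :
    ∑ k, (w k + c * ((if k = j then 1 else 0) - if k = i then 1 else 0)) • q k
      = ∑ k, w k • q k + c • (q j - q i) := by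
  simp [add_smul, Finset.sum_add_distrib, mul_sub, sub_smul, smul_sub, Finset.sum_sub_distrib,
    ite_smul]

theorem sum_pert' {n : ℕ} (i j : Fin (n+1)) (c : ℝ) (w : Fin (n+1) → ℝ) :
    ∑ k, (w k + c * ((if k = j then 1 else 0) - if k = i then 1 else 0)) = ∑ k, w k := by
  simp [Finset.sum_add_distrib, mul_sub, Finset.sum_sub_distrib]

theorem indep_update {n : ℕ} {q : Fin (n+1) → Fin n → ℝ} (hq : AffineIndependent ℝ q)
    {i j : Fin (n+1)} (hij : i ≠ j) {t : ℝ} (ht : t < 1) :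
    AffineIndependent ℝ (Function.update q i (q i + t • (q j - q i))) := by
  rw [affineIndependent_iff_of_fintype]
  intro w hw h0
  rw [Finset.univ.weightedVSub_eq_linear_combination hw, sum_update, add_sub_cancel_left, smul_smul,
    ← sum_pert q i j (w i * t) w] at h0
  have hw' := sum_pert' i j (w i * t) w
  rw [hw] at hw'
  have key := affineIndependent_iff.1 hq Finset.univ _ hw' h0
  have hi : w i = 0 := by
    have := key i (Finset.mem_univ _)
    simp [hij] at this
    have h2 : w i * (1 - t) = 0 := by linarith
    rcases mul_eq_zero.1 h2 with h | h
    · exact h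
    · linarith
  intro k
  have := key k (Finset.mem_univ _)
  simpa [hi] using this

theorem mem_hull {n : ℕ} (q : Fin (n+1) → Fin n → ℝ) (w : Fin (n+1) → ℝ) (h0 : ∀ k, 0 ≤ w k)
    (h1 : ∑ k, w k = 1) : ∑ k, w k • q k ∈ hull q :=
  mem_convexHull_of_exists_fintype w q h0 h1 (fun k => Set.mem_range_self k) rfl

theorem mem_half {n : ℕ} (q : Fin (n+1) → Fin n → ℝ) (w : Fin (n+1) → ℝ) (h0 : ∀ k, 0 ≤ w k)
    (h1 : ∑ k, w k = 1) {i j : Fin (n+1)} (hij : i ≠ j) {t : ℝ} (ht0 : 0 ≤ t) (ht : t < 1)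
    (hw : t * w i ≤ (1 - t) * w j) :
    ∑ k, w k • q k ∈ hull (Function.update q i (q i + t • (q j - q i))) := by
  have ht' : 0 < 1 - t := by linarith
  have hc : t * w i / (1 - t) ≤ w j := by rw [div_le_iff₀ ht']; linarith
  have hc0 : 0 ≤ t * w i / (1 - t) := div_nonneg (mul_nonneg ht0 (h0 i)) ht'.le
  have key := mem_hull (Function.update q i (q i + t • (q j - q i)))
    (fun k => w k + (t * w i / (1 - t)) * ((if k = i then 1 else 0) - if k = j then 1 else 0))
    (by
      intro k
      by_cases hki : k = i
      · subst hki; simp [hij]; linarith [h0 k]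
      · by_cases hkj : k = j
        · subst hkj; simp [hki]; linarith
        · simp [hki, hkj, h0 k]) (by rw [sum_pert', h1])
  rw [sum_pert, sum_update] at key
  convert key using 1
  rw [Function.update_self, Function.update_of_ne hij.symm, add_assoc, eq_comm]
  ext a
  simp
  field_simp
  ring

theorem half_sub {n : ℕ} (q : Fin (n+1) → Fin n → ℝ) (i j : Fin (n+1)) {t : ℝ} (ht0 : 0 ≤ t)
    (ht : t ≤ 1) : hull (Function.update q i (q i + t • (q j - q i))) ⊆ hull q := by
  refine convexHull_min ?_ (convex_convexHull ℝ _)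
  have hq : ∀ k, q k ∈ hull q := fun k => subset_convexHull ℝ _ (Set.mem_range_self k)
  rintro _ ⟨k, rfl⟩
  by_cases hk : k = i
  · subst hk
    rw [Function.update_self]
    have := (convex_convexHull ℝ (Set.range q)) (hq k) (hq j) (sub_nonneg.2 ht) ht0 (by ring)
    convert this using 1
    ext a; simp; ring
  · rw [Function.update_of_ne hk]; exact hq k

theorem split {n : ℕ} {q : Fin (n+1) → Fin n → ℝ} (hq : AffineIndependent ℝ q)
    {i j : Fin (n+1)} (hij : i ≠ j) {t : ℝ} (ht0 : 0 < t) (ht : t < 1)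
    {Q : (Fin (n+1) → Fin n → ℝ) → Prop}
    (h1 : Q (Function.update q i (q i + t • (q j - q i))))
    (h2 : Q (Function.update q j (q j + (1 - t) • (q i - q j)))) :
    Dis (hull q) Q := by
  set q1 := Function.update q i (q i + t • (q j - q i)) with hq1
  set q2 := Function.update q j (q j + (1 - t) • (q i - q j)) with hq2
  let b : AffineBasis (Fin (n+1)) ℝ (Fin n → ℝ) := ⟨q, hq, span_top hq⟩
  have hb : ∀ k, b k = q k := fun k => rfl
  have hbc : ∀ k l, b.coord k (q l) = if k = l then 1 else 0 := fun k l => by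
    rw [← hb, b.coord_apply]
  let l : (Fin n → ℝ) →ᵃ[ℝ] ℝ := (1 - t) • b.coord j - t • b.coord i
  have hl : ∀ x, l x = (1 - t) * b.coord j x - t * b.coord i x := fun x => rfl
  have e1 : q i + t • (q j - q i) = AffineMap.lineMap (q i) (q j) t := by
    rw [AffineMap.lineMap_apply]; simp [add_comm]
  have e2 : q j + (1 - t) • (q i - q j) = AffineMap.lineMap (q j) (q i) (1 - t) := by
    rw [AffineMap.lineMap_apply]; simp [add_comm]
  have p1 : ∀ x ∈ hull q1, 0 ≤ l x := by
    apply hull_nonneg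
    intro k
    by_cases hk : k = i
    · subst hk
      rw [hq1, Function.update_self, e1, hl, AffineMap.apply_lineMap, AffineMap.apply_lineMap]
      simp [hbc, hij, hij.symm, AffineMap.lineMap_apply]
      linarith
    · rw [hq1, Function.update_of_ne hk, hl]
      simp only [hbc, Ne.symm hk, if_false]
      split_ifs <;> linarith
  have p2 : ∀ x ∈ hull q2, l x ≤ 0 := by
    apply hull_nonpos
    intro k
    by_cases hk : k = j
    · subst hk
      rw [hq2, Function.update_self, e2, hl, AffineMap.apply_lineMap, AffineMap.apply_lineMap]
      simp [hbc, hij, hij.symm, AffineMap.lineMap_apply]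
      linarith
    · rw [hq2, Function.update_of_ne hk, hl]
      simp only [hbc, Ne.symm hk, if_false]
      split_ifs <;> linarith
  have hd : interior (hull q1) ∩ interior (hull q2) = ∅ := by
    by_contra hne
    obtain ⟨x, hx⟩ := Set.nonempty_iff_ne_empty.2 hne
    have hO : IsOpen (interior (hull q1) ∩ interior (hull q2)) :=
      isOpen_interior.inter isOpen_interior
    have hz : ∀ z ∈ interior (hull q1) ∩ interior (hull q2), l z = 0 := fun z hz =>
      le_antisymm (p2 z (interior_subset hz.2)) (p1 z (interior_subset hz.1))
    have hc : Continuous (fun s : ℝ => AffineMap.lineMap x (q j) s : ℝ → Fin n → ℝ) :=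
      AffineMap.lineMap_continuous
    have hev : ∀ᶠ s in nhds (0:ℝ), (AffineMap.lineMap x (q j) s : Fin n → ℝ) ∈
        interior (hull q1) ∩ interior (hull q2) :=
      hc.continuousAt.eventually_mem (hO.mem_nhds (by simpa using hx))
    obtain ⟨ε, hε, hball⟩ := Metric.eventually_nhds_iff.1 hev
    have h3 := hz _ (hball (y := ε / 2) (by rw [Real.dist_eq]; rw [abs_of_pos] <;> linarith))
    rw [AffineMap.apply_lineMap, hz x hx, hl (q j)] at h3
    simp [hbc, hij, AffineMap.lineMap_apply] at h3
    rcases h3 with h3 | h3 <;> linarith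
  refine ⟨{q1, q2}, by simp, ?_, ?_, ?_⟩
  · rintro r (rfl | rfl)
    · exact ⟨indep_update hq hij ht, h1⟩
    · exact ⟨indep_update hq hij.symm (by linarith), h2⟩
  · rintro r (rfl | rfl) s (rfl | rfl) hrs
    · exact absurd rfl hrs
    · exact hd
    · rw [Set.inter_comm]; exact hd
    · exact absurd rfl hrs
  · rw [Set.biUnion_pair]
    apply Set.Subset.antisymm
    · exact Set.union_subset (half_sub q i j ht0.le ht.le)
        (half_sub q j i (by linarith) (by linarith))
    · intro x hx
      have hx' : ∀ k, 0 ≤ b.coord k x := by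
        have := b.convexHull_eq_nonneg_coord
        have h' : x ∈ convexHull ℝ (Set.range b) := hx
        rw [this] at h'
        exact h'
      have hs := b.linear_combination_coord_eq_self x
      have h1 := b.sum_coord_apply_eq_one x
      rw [← hs]
      rcases le_total (t * b.coord i x) ((1 - t) * b.coord j x) with h | h
      · exact Or.inl (mem_half q (fun k => b.coord k x) hx' h1 hij ht0.le ht h)
      · exact Or.inr (mem_half q (fun k => b.coord k x) hx' h1 hij.symm (by linarith)
          (by linarith) (by simpa using h))

theorem dis_oneSided {n : ℕ} (l : (Fin n → ℝ) →ᵃ[ℝ] ℝ) : ∀ (N : ℕ) (q : Fin (n+1) → Fin n → ℝ),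
    AffineIndependent ℝ q → (Finset.univ.filter fun k => l (q k) ≠ 0).card = N →
    Dis (hull q) (fun r => OneSided l (hull r)) := by
  intro N
  induction N using Nat.strong_induction_on with
  | _ N ih =>
  intro q hq hN
  by_cases hpos : ∀ k, 0 ≤ l (q k)
  · exact Dis.single hq (Or.inl (hull_nonneg l q hpos))
  by_cases hneg : ∀ k, l (q k) ≤ 0
  · exact Dis.single hq (Or.inr (hull_nonpos l q hneg))
  push Not at hpos hneg
  obtain ⟨j, hj⟩ := hpos
  obtain ⟨i, hi⟩ := hneg
  have hij : i ≠ j := by rintro rfl; linarith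
  have hD : 0 < l (q i) - l (q j) := by linarith
  set t := l (q i) / (l (q i) - l (q j)) with ht
  have ht0 : 0 < t := div_pos hi hD
  have ht1 : t < 1 := by rw [ht, div_lt_one hD]; linarith
  have e1 : q i + t • (q j - q i) = AffineMap.lineMap (q i) (q j) t := by
    rw [AffineMap.lineMap_apply]; simp [add_comm]
  have e2 : q j + (1 - t) • (q i - q j) = AffineMap.lineMap (q j) (q i) (1 - t) := by
    rw [AffineMap.lineMap_apply]; simp [add_comm]
  have z1 : l (q i + t • (q j - q i)) = 0 := by
    rw [e1, AffineMap.apply_lineMap, AffineMap.lineMap_apply]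
    simp [ht]; field_simp; ring
  have z2 : l (q j + (1 - t) • (q i - q j)) = 0 := by
    rw [e2, AffineMap.apply_lineMap, AffineMap.lineMap_apply]
    simp [ht]; field_simp; ring
  have dec : ∀ (a : Fin (n+1)) (m : Fin n → ℝ), l (q a) ≠ 0 → l m = 0 →
      (Finset.univ.filter fun k => l (Function.update q a m k) ≠ 0).card < N := by
    intro a m ha hm
    rw [← hN]
    apply Finset.card_lt_card
    rw [Finset.ssubset_iff_of_subset]
    · exact ⟨a, by simpa using ha, by simpa using hm⟩
    · intro k
      by_cases hk : k = a
      · subst hk; simp [hm]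
      · simp [hk]
  refine (split hq hij ht0 ht1 (Q := fun r =>
    (Finset.univ.filter fun k => l (r k) ≠ 0).card < N) (dec _ _ hi.ne' z1)
    (dec _ _ hj.ne z2)).bind ?_
  intro r hr hrN _
  exact ih _ hrN r hr rfl

end PLV
namespace PLV

/-- piecewise affine functions -/
def PLf {n : ℕ} (φ : (Fin n → ℝ) → ℝ) : Prop :=
  ∀ p : Fin (n+1) → Fin n → ℝ, AffineIndependent ℝ p →
    Dis (hull p) (fun q => ∃ g : (Fin n → ℝ) →ᵃ[ℝ] ℝ, ∀ x ∈ hull q, φ x = g x)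

theorem PLf.affine {n : ℕ} (g : (Fin n → ℝ) →ᵃ[ℝ] ℝ) : PLf (fun x => g x) :=
  fun _ hp => Dis.single hp ⟨g, fun _ _ => rfl⟩

theorem PLf.max {n : ℕ} {φ ψ : (Fin n → ℝ) → ℝ} (h1 : PLf φ) (h2 : PLf ψ) :
    PLf (fun x => max (φ x) (ψ x)) := by
  intro p hp
  refine (h1 p hp).bind fun q hq ⟨g, hg⟩ _ => ?_
  refine (h2 q hq).bind fun r hr ⟨h, hh⟩ hrq => ?_
  refine (dis_oneSided (g - h) _ r hr rfl).bind fun s hs hside hsr => ?_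
  refine Dis.single hs ?_
  rcases hside with hside | hside
  · refine ⟨g, fun x hx => ?_⟩
    have := hside x hx
    beta_reduce
    rw [hg x (hrq (hsr hx)), hh x (hsr hx), max_eq_left]
    exact sub_nonneg.1 this
  · refine ⟨h, fun x hx => ?_⟩
    have := hside x hx
    beta_reduce
    rw [hg x (hrq (hsr hx)), hh x (hsr hx), max_eq_right]
    exact sub_nonpos.1 this

theorem PLf.const_sub {n : ℕ} {φ : (Fin n → ℝ) → ℝ} (c : ℝ) (h1 : PLf φ) :
    PLf (fun x => c - φ x) := by
  intro p hp
  refine (h1 p hp).bind fun q hq ⟨g, hg⟩ _ => Dis.single hq ?_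
  exact ⟨AffineMap.const ℝ _ c - g, fun x hx => by simp [hg x hx]⟩

/-- coordinate -/
def co {n : ℕ} (i : Fin n) : (Fin n → ℝ) →ᵃ[ℝ] ℝ :=
  (LinearMap.proj i : (Fin n → ℝ) →ₗ[ℝ] ℝ).toAffineMap

theorem co_apply {n : ℕ} (i : Fin n) (x : Fin n → ℝ) : co i x = x i := rfl

theorem PLf.norm {n : ℕ} (y : Fin n → ℝ) : PLf (fun x => ‖x - y‖) := by
  have h : ∀ s : Finset (Fin n), PLf (fun x : Fin n → ℝ => ((s.sup fun i => ‖(x - y) i‖₊ : NNReal) : ℝ)) := by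
    intro s
    induction s using Finset.induction_on with
    | empty => simpa using PLf.affine (AffineMap.const ℝ (Fin n → ℝ) (0:ℝ))
    | insert a s _ ih =>
      have h1 := PLf.affine (co a - AffineMap.const ℝ _ (y a))
      have h2 := PLf.affine (AffineMap.const ℝ _ (y a) - co a)
      have h3 := (h1.max h2).max ih
      convert h3 using 2 with x
      rw [Finset.sup_insert, NNReal.coe_max]
      congr 1
      simp [co_apply, Real.norm_eq_abs, abs_eq_max_neg]
  simpa [Pi.norm_def] using h Finset.univ

/-- big simplex -/
def big (n : ℕ) : Fin (n+1) → Fin n → ℝ := Fin.cons 0 (fun i => Pi.single i (n:ℝ))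

theorem sum_big {n : ℕ} (w : Fin (n+1) → ℝ) (i : Fin n) :
    (∑ k, w k • big n k) i = w i.succ * n := by
  rw [Fin.sum_univ_succ]
  simp [big, Finset.sum_apply, Pi.single_apply]

theorem big_indep {n : ℕ} (hn : 1 ≤ n) : AffineIndependent ℝ (big n) := by
  rw [affineIndependent_iff_of_fintype]
  intro w hw h0
  rw [Finset.univ.weightedVSub_eq_linear_combination hw] at h0
  have hs : ∀ i : Fin n, w i.succ = 0 := by
    intro i
    have := sum_big w i
    rw [h0] at this
    have hn' : (n:ℝ) ≠ 0 := by positivity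
    simpa [hn'] using this
  intro k
  refine Fin.cases ?_ hs k
  rw [Fin.sum_univ_succ] at hw
  simpa [hs] using hw

theorem cube_sub_big {n : ℕ} (hn : 1 ≤ n) : Set.Icc (0 : Fin n → ℝ) 1 ⊆ hull (big n) := by
  intro x hx
  have hn' : (0:ℝ) < n := by positivity
  have := mem_hull (big n) (Fin.cons (1 - ∑ i, x i / n) (fun i => x i / n)) (by
    intro k
    refine Fin.cases ?_ (fun i => ?_) k
    · simp only [Fin.cons_zero]
      rw [← Finset.sum_div, sub_nonneg, div_le_one hn']
      calc ∑ i, x i ≤ ∑ i : Fin n, (1:ℝ) := Finset.sum_le_sum fun i _ => hx.2 i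
        _ = n := by simp
    · simp only [Fin.cons_succ]
      exact div_nonneg (hx.1 i) hn'.le) (by simp [Fin.sum_univ_succ])
  convert this using 1
  ext i
  rw [sum_big]
  simp
  field_simp

theorem closure_int_cube {n : ℕ} :
    Set.Icc (0 : Fin n → ℝ) 1 ⊆ closure {x | ∀ i, x i ∈ Set.Ioo (0:ℝ) 1} := by
  have : {x : Fin n → ℝ | ∀ i, x i ∈ Set.Ioo (0:ℝ) 1} =
      Set.univ.pi (fun _ => Set.Ioo (0:ℝ) 1) := by ext; simp
  rw [this, closure_pi_set]
  intro x hx i _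
  rw [closure_Ioo (by norm_num)]
  exact ⟨hx.1 i, hx.2 i⟩

theorem dis_cube {n : ℕ} (hn : 1 ≤ n) : Dis (Set.Icc (0 : Fin n → ℝ) 1) (fun _ => True) := by
  have h : ∀ s : Finset (Fin n), Dis (hull (big n)) (fun q => ∀ i ∈ s,
      OneSided (co i) (hull q) ∧ OneSided (AffineMap.const ℝ _ 1 - co i) (hull q)) := by
    intro s
    induction s using Finset.induction_on with
    | empty => exact Dis.single (big_indep hn) (by simp)
    | insert a s _ ih =>
      refine ih.bind fun q hq hqs _ => ?_
      refine (dis_oneSided (co a) _ q hq rfl).bind fun r hr hr1 hrq => ?_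
      refine (dis_oneSided (AffineMap.const ℝ _ 1 - co a) _ r hr rfl).bind fun u hu hu1 hur => ?_
      refine Dis.single hu fun i hi => ?_
      rcases Finset.mem_insert.1 hi with rfl | hi
      · exact ⟨hr1.mono hur, hu1⟩
      · exact ⟨(hqs i hi).1.mono (hur.trans hrq), (hqs i hi).2.mono (hur.trans hrq)⟩
  obtain ⟨T, hT, hQ, hd, hu⟩ := h Finset.univ
  have hfin : {q ∈ T | hull q ⊆ Set.Icc (0 : Fin n → ℝ) 1}.Finite := hT.subset (Set.sep_subset _ _)
  refine ⟨{q ∈ T | hull q ⊆ Set.Icc (0 : Fin n → ℝ) 1}, hfin,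
    fun q hq => ⟨(hQ q hq.1).1, trivial⟩, fun q hq r hr => hd q hq.1 r hr.1, ?_⟩
  apply Set.Subset.antisymm
  · exact Set.iUnion₂_subset fun q hq => hq.2
  · refine closure_int_cube.trans (closure_minimal ?_ ?_)
    · intro x hx
      have hxb : x ∈ hull (big n) := cube_sub_big hn ⟨fun i => (hx i).1.le, fun i => (hx i).2.le⟩
      rw [← hu] at hxb
      simp only [Set.mem_iUnion] at hxb
      obtain ⟨q, hq, hxq⟩ := hxb
      refine Set.mem_biUnion (x := q) ⟨hq, fun z hz => ⟨fun i => ?_, fun i => ?_⟩⟩ hxq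
      · rcases ((hQ q hq).2 i (Finset.mem_univ _)).1 with h | h
        · exact h z hz
        · exact absurd (h x hxq) (not_le.2 (hx i).1)
      · rcases ((hQ q hq).2 i (Finset.mem_univ _)).2 with h | h
        · exact sub_nonneg.1 (h z hz)
        · exact absurd (sub_nonpos.1 (h x hxq)) (not_le.2 (hx i).2)
    · refine hfin.isClosed_biUnion fun q _ => ?_
      exact (Set.finite_range q).isClosed_convexHull ℝ

/-- bump function -/
noncomputable def bump {n : ℕ} (y : Fin n → ℝ) (ε : ℝ) (x : Fin n → ℝ) : ℝ := max 0 (ε - ‖x - y‖)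

theorem bump_PL {n : ℕ} (y : Fin n → ℝ) (ε : ℝ) : PLf (bump y ε) :=
  (PLf.affine (AffineMap.const ℝ (Fin n → ℝ) (0:ℝ))).max ((PLf.norm y).const_sub ε)

theorem bump_lip {n : ℕ} (y : Fin n → ℝ) (ε : ℝ) (x z : Fin n → ℝ) :
    |bump y ε x - bump y ε z| ≤ ‖x - z‖ := by
  unfold bump
  refine (abs_max_sub_max_le_max _ _ _ _).trans ?_
  have h2 := abs_norm_sub_norm_le (z - y) (x - y)
  have : z - y - (x - y) = -(x - z) := by abel
  rw [this, norm_neg] at h2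
  simpa using h2

theorem bump_cont {n : ℕ} (y : Fin n → ℝ) (ε : ℝ) : Continuous (bump y ε) := by
  unfold bump; fun_prop

/-- the perturbed map -/
noncomputable def mp {n : ℕ} (y : Fin n → ℝ) (ε s : ℝ) (e : Fin n) (x : Fin n → ℝ) : Fin n → ℝ :=
  x + (s * bump y ε x) • Pi.single e 1

theorem mp_e {n : ℕ} (y : Fin n → ℝ) (ε s : ℝ) (e : Fin n) (x : Fin n → ℝ) :
    mp y ε s e x e = x e + s * bump y ε x := by simp [mp]

theorem mp_ne {n : ℕ} (y : Fin n → ℝ) (ε s : ℝ) (e i : Fin n) (h : i ≠ e) (x : Fin n → ℝ) :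
    mp y ε s e x i = x i := by simp [mp, h]

theorem bump_le {n : ℕ} (y : Fin n → ℝ) (ε : ℝ) (e : Fin n) (h0 : ε ≤ y e) (h1 : ε ≤ 1 - y e)
    (x : Fin n → ℝ) (hx : x e ∈ Set.Icc (0:ℝ) 1) :
    0 ≤ bump y ε x ∧ bump y ε x ≤ x e ∧ bump y ε x ≤ 1 - x e := by
  have := norm_le_pi_norm (x - y) e
  rw [Pi.sub_apply, Real.norm_eq_abs, abs_le'] at this
  refine ⟨le_max_left _ _, max_le hx.1 ?_, max_le (by linarith [hx.2]) ?_⟩ <;> linarith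

theorem exists_homeo {n : ℕ} (y : Fin n → ℝ) (ε s : ℝ) (e : Fin n) (h0 : ε ≤ y e)
    (h1 : ε ≤ 1 - y e) (hs : s ∈ Set.Ioo (0:ℝ) 1) :
    ∃ f : Homeomorph (Cube n) (Cube n), ∀ x, (f x : Fin n → ℝ) = mp y ε s e x := by
  have hc : Continuous (mp y ε s e) := by
    have := bump_cont y ε
    unfold mp; fun_prop
  have hmaps : ∀ x : Cube n, mp y ε s e x ∈ Set.Icc (0 : Fin n → ℝ) 1 := by
    intro x
    obtain ⟨b0, b1, b2⟩ := bump_le y ε e h0 h1 x ⟨x.2.1 e, x.2.2 e⟩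
    have hsb : s * bump y ε x ≤ bump y ε x := mul_le_of_le_one_left b0 hs.2.le
    have hsb0 : 0 ≤ s * bump y ε x := mul_nonneg hs.1.le b0
    constructor <;> intro i <;> by_cases hi : i = e
    · subst hi; rw [mp_e]; exact add_nonneg (x.2.1 i) hsb0
    · rw [mp_ne _ _ _ _ _ hi]; exact x.2.1 i
    · subst hi; rw [mp_e]; simp only [Pi.one_apply]; linarith
    · rw [mp_ne _ _ _ _ _ hi]; exact x.2.2 i
  let F : Cube n → Cube n := fun x => ⟨mp y ε s e x, hmaps x⟩
  have hF : Continuous F := (hc.comp continuous_subtype_val).subtype_mk _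
  have hinj : Function.Injective F := by
    intro a b hab
    have hab' : mp y ε s e a = mp y ε s e b := congrArg Subtype.val hab
    have h2 : a.1 - b.1 = (s * (bump y ε b - bump y ε a)) • Pi.single e 1 := by
      unfold mp at hab'
      rw [mul_sub, sub_smul, sub_eq_sub_iff_add_eq_add, hab', add_comm]
    have h3 : ‖a.1 - b.1‖ = s * |bump y ε b - bump y ε a| := by
      rw [h2, norm_smul, Pi.norm_single, Real.norm_eq_abs, abs_mul, abs_of_pos hs.1]
      simp
    have h4 := bump_lip y ε b a
    rw [norm_sub_rev] at h4
    have h5 : ‖a.1 - b.1‖ ≤ s * ‖a.1 - b.1‖ := by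
      nth_rw 1 [h3]; exact mul_le_mul_of_nonneg_left h4 hs.1.le
    have h6 : ‖a.1 - b.1‖ = 0 := by
      have := norm_nonneg (a.1 - b.1)
      nlinarith [hs.2]
    exact Subtype.ext (sub_eq_zero.1 (norm_eq_zero.1 h6))
  have hsurj : Function.Surjective F := by
    intro w
    let h : ℝ → ℝ := fun r => r + s * bump y ε (Function.update (w : Fin n → ℝ) e r)
    have hh : Continuous h := by
      have := bump_cont y ε
      have h2 : Continuous fun r : ℝ => Function.update (w : Fin n → ℝ) e r := by fun_prop
      exact continuous_id.add (continuous_const.mul (this.comp h2))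
    have hh0 : h 0 = 0 := by
      obtain ⟨b0, b1, b2⟩ := bump_le y ε e h0 h1 (Function.update (w : Fin n → ℝ) e 0) (by simp)
      have : bump y ε (Function.update (w : Fin n → ℝ) e 0) = 0 :=
        le_antisymm (by simpa using b1) b0
      simp [h, this]
    have hh1 : h 1 = 1 := by
      obtain ⟨b0, b1, b2⟩ := bump_le y ε e h0 h1 (Function.update (w : Fin n → ℝ) e 1) (by simp)
      have : bump y ε (Function.update (w : Fin n → ℝ) e 1) = 0 :=
        le_antisymm (by simpa using b2) b0
      simp [h, this]
    obtain ⟨r, hr, hrw⟩ := intermediate_value_Icc (zero_le_one' ℝ) hh.continuousOn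
      (show (w : Fin n → ℝ) e ∈ Set.Icc (h 0) (h 1) by
        rw [hh0, hh1]; exact ⟨w.2.1 e, w.2.2 e⟩)
    refine ⟨⟨Function.update (w : Fin n → ℝ) e r, ?_⟩, Subtype.ext ?_⟩
    · constructor <;> intro i <;> by_cases hi : i = e
      · subst hi; simpa using hr.1
      · simpa [hi] using w.2.1 i
      · subst hi; simpa using hr.2
      · simpa [hi] using w.2.2 i
    · ext i
      by_cases hi : i = e
      · subst hi; simp only [F]; rw [mp_e]; simpa [h] using hrw
      · simp only [F]; rw [mp_ne _ _ _ _ _ hi]; simp [hi]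
  have hE : Continuous (Equiv.ofBijective F ⟨hinj, hsurj⟩) := hF
  exact ⟨hE.homeoOfEquivCompactToT2, fun x => rfl⟩

theorem grad_bound {n : ℕ} (y : Fin n → ℝ) (ε : ℝ) (e : Fin n) {q : Fin (n+1) → Fin n → ℝ}
    (hq : AffineIndependent ℝ q) (g : (Fin n → ℝ) →ᵃ[ℝ] ℝ)
    (hg : ∀ x ∈ hull q, bump y ε x = g x) : |g.linear (Pi.single e 1)| ≤ 1 := by
  obtain ⟨x, hx⟩ := interior_ne hq
  have hc : Continuous (fun d : ℝ => x + d • (Pi.single e 1 : Fin n → ℝ)) := by fun_prop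
  have hev : ∀ᶠ d in nhds (0:ℝ), x + d • (Pi.single e 1 : Fin n → ℝ) ∈ interior (hull q) :=
    hc.continuousAt.eventually_mem (isOpen_interior.mem_nhds (by simpa using hx))
  obtain ⟨δ, hδ, hball⟩ := Metric.eventually_nhds_iff.1 hev
  have h3 := hball (y := δ / 2) (by rw [Real.dist_eq]; rw [abs_of_pos] <;> linarith)
  have h4 := bump_lip y ε (x + (δ / 2) • (Pi.single e 1 : Fin n → ℝ)) x
  rw [hg _ (interior_subset h3), hg _ (interior_subset hx), add_comm x, ← vadd_eq_add,
    AffineMap.map_vadd, vadd_eq_add, vadd_eq_add, add_sub_cancel_right, add_sub_cancel_right,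
    map_smul, norm_smul, Pi.norm_single, smul_eq_mul, abs_mul, Real.norm_eq_abs] at h4
  have h5 : 0 < |δ / 2| := by positivity
  have h6 : ‖(1:ℝ)‖ = 1 := norm_one
  rw [h6] at h4
  exact le_of_mul_le_mul_left h4 h5

theorem isPL {n : ℕ} (hn : 1 ≤ n) (y : Fin n → ℝ) (ε s : ℝ) (e : Fin n)
    (hs : s ∈ Set.Ioo (0:ℝ) 1) (f : Homeomorph (Cube n) (Cube n))
    (hf : ∀ x, (f x : Fin n → ℝ) = mp y ε s e x) : IsPLCubeHomeo f := by
  obtain ⟨T, hT, hQ, hd, hu⟩ := (dis_cube hn).bind fun q hq _ _ => bump_PL y ε q hq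
  have hex : ∀ q : T, ∃ A : (Fin n → ℝ) →ᵃ[ℝ] (Fin n → ℝ), 0 < LinearMap.det A.linear ∧
      ∀ x ∈ hull q.1, mp y ε s e x = A x := by
    intro q
    obtain ⟨hq, g, hg⟩ := hQ q.1 q.2
    let v : (Fin n → ℝ) := s • Pi.single e 1
    let A : (Fin n → ℝ) →ᵃ[ℝ] (Fin n → ℝ) :=
      AffineMap.id ℝ _ + (LinearMap.toSpanSingleton ℝ (Fin n → ℝ) v).toAffineMap.comp g
    have hA : A.linear = LinearMap.transvection g.linear v := by
      ext x i
      simp [A, LinearMap.transvection.apply]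
    refine ⟨A, ?_, ?_⟩
    · rw [hA, LinearMap.transvection.det, map_smul, smul_eq_mul]
      have := abs_le.1 (grad_bound y ε e hq g hg)
      nlinarith [hs.1, hs.2, this.1]
    · intro x hx
      simp only [mp, hg x hx, A, v]
      simp [smul_smul, mul_comm]
  choose A hA1 hA2 using hex
  have : Finite T := hT
  obtain ⟨k, ⟨eq⟩⟩ := Finite.exists_equiv_fin T
  refine ⟨k, fun i => (eq.symm i).1, fun i => A (eq.symm i), fun i => (hQ _ (eq.symm i).2).1, ?_, ?_,
    fun i => hA1 _, ?_⟩
  · intro i j hij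
    refine hd _ (eq.symm i).2 _ (eq.symm j).2 fun h => hij ?_
    exact eq.symm.injective (Subtype.ext h)
  · rw [← hu, Set.biUnion_eq_iUnion]
    exact eq.symm.surjective.iUnion_comp (fun q : T => hull q.1)
  · intro i x hx
    rw [hf x]
    exact hA2 _ x hx

end PLV

theorem plCubeVert_local_perturbations (n : ℕ) (hn : 1 ≤ n)
    (U : Set (Cube n)) (hU : IsOpen U) (hUne : U.Nonempty)
    (y : Cube n) (hy : y ∈ U)
    (ht : (y : Fin n → ℝ) ⟨n - 1, by omega⟩ ∈ Set.Ioo (0 : ℝ) 1) :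
    ¬ Set.Countable {z : Cube n | ∃ f : Homeomorph (Cube n) (Cube n),
        IsPLCubeHomeo f ∧ (∀ c : Fin n → ℝ, ⇑f '' VertLine c = VertLine c) ∧
        (∀ w ∉ U, f w = w) ∧ f y = z} := by
  intro hcount
  set e : Fin n := ⟨n - 1, by omega⟩ with he
  obtain ⟨δ, hδ, hball⟩ := Metric.isOpen_iff.1 hU y hy
  obtain ⟨ε, hε, hεm⟩ : ∃ ε : ℝ, 0 < ε ∧ ε ≤ min δ (min ((y : Fin n → ℝ) e) (1 - (y : Fin n → ℝ) e)) :=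
    ⟨_, lt_min hδ (lt_min ht.1 (by linarith [ht.2])), le_rfl⟩
  have hεδ : ε ≤ δ := hεm.trans (min_le_left _ _)
  have h0 : ε ≤ (y : Fin n → ℝ) e := hεm.trans ((min_le_right _ _).trans (min_le_left _ _))
  have h1 : ε ≤ 1 - (y : Fin n → ℝ) e := hεm.trans ((min_le_right _ _).trans (min_le_right _ _))
  have himg := hcount.image (fun z : Cube n => ((z : Fin n → ℝ) e - (y : Fin n → ℝ) e) / ε)
  have hsub : Set.Ioo (0:ℝ) 1 ⊆ (fun z : Cube n => ((z : Fin n → ℝ) e - (y : Fin n → ℝ) e) / ε) ''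
      {z : Cube n | ∃ f : Homeomorph (Cube n) (Cube n),
        IsPLCubeHomeo f ∧ (∀ c : Fin n → ℝ, ⇑f '' VertLine c = VertLine c) ∧
        (∀ w ∉ U, f w = w) ∧ f y = z} := by
    intro s hs
    obtain ⟨f, hf⟩ := PLV.exists_homeo (y : Fin n → ℝ) ε s e h0 h1 hs
    have hv : ∀ (c : Fin n → ℝ) (x : Cube n), f x ∈ VertLine c ↔ x ∈ VertLine c := by
      intro c x
      refine forall_congr' fun i => imp_congr_right fun hi => ?_
      rw [hf, PLV.mp_ne]
      rintro rfl
      simp [he] at hi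
      omega
    refine ⟨f y, ⟨f, PLV.isPL hn _ ε s e hs f hf, ?_, ?_, rfl⟩, ?_⟩
    · intro c
      ext x
      constructor
      · rintro ⟨z, hz, rfl⟩
        exact (hv c z).2 hz
      · intro hx
        refine ⟨f.symm x, (hv c _).1 (by simpa using hx), by simp⟩
    · intro w hw
      apply Subtype.ext
      have hd : δ ≤ dist w y := by
        by_contra hlt
        exact hw (hball (by simpa using hlt))
      rw [Subtype.dist_eq, dist_eq_norm] at hd
      have : PLV.bump (y : Fin n → ℝ) ε w = 0 := max_eq_left (by linarith)
      rw [hf, PLV.mp, this]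
      simp
    · have : PLV.bump (y : Fin n → ℝ) ε y = ε := by simp [PLV.bump, hε.le]
      simp only [hf, PLV.mp_e, this]
      field_simp
      ring
  have := himg.mono hsub
  rw [Cardinal.Real.Ioo_countable_iff] at this
  linarith
end

section
/- Let M be a topological manifold (in particular a regular Hausdorff space), let f be a homeomorphism of M, and let W ⊆ M be open. If f(cl(U)) ⊆ cl(U) for every open set U ⊆ W, then f(x) = x for every x ∈ W. -/
/-- Let `M` be a topological manifold, `f` a homeomorphism of `M`, and `W ⊆ M` open.
If `f(cl U) ⊆ cl U` for every open `U ⊆ W`, then `f` fixes every point of `W`. -/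
theorem fixes_of_preserves_closures
    {n : ℕ} {M : Type*} [TopologicalSpace M] [T2Space M]
    [ChartedSpace (EuclideanSpace ℝ (Fin n)) M]
    (f : Homeomorph M M) (W : Set M) (hW : IsOpen W)
    (h : ∀ U : Set M, IsOpen U → U ⊆ W → ⇑f '' closure U ⊆ closure U) :
    ∀ x ∈ W, f x = x := by
  intro x hx
  by_contra hne
  obtain ⟨A, B, hA, hB, hfA, hxB, hd⟩ := t2_separation hne
  have hmem : f x ∈ closure (B ∩ W) :=
    h (B ∩ W) (hB.inter hW) Set.inter_subset_right ⟨x, subset_closure ⟨hxB, hx⟩, rfl⟩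
  obtain ⟨y, hyA, hyB, _⟩ := mem_closure_iff.1 hmem A hA hfA
  exact Set.disjoint_left.1 hd hyA hyB
end
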